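/- Let n ≥ 4 be an even integer and k a field with char k = 0 or char k > n. Let f ∈ k[x,z] be a binary form of degree n and let q₁, q₂, q₃ ∈ k[x,z] be binary quadratic forms. Then for every nonnegative m₁, m₂, m₃ with m₁+m₂+m₃ = n/2 the element δ₁^{m₁}δ₂^{m₂}δ₃^{m₃}(f) is a constant, and n!·R(q₁,q₂,q₃)^{n/2}·f(x,z) = Σ_{m₁+m₂+m₃ = n/2} ((n/2)!/(m₁!·m₂!·m₃!)) · q₁*(x,z)^{m₁} · q₂*(x,z)^{m₂} · q₃*(x,z)^{m₃} · (δ₁^{m₁}δ₂^{m₂}δ₃^{m₃} f). -/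

import Mathlib

open MvPolynomial

/-- Iterated partial derivative in the variable `x` (the variable `0`). -/
noncomputable def dX {k : Type*} [CommSemiring k] (n : ℕ) (p : MvPolynomial (Fin 2) k) :
    MvPolynomial (Fin 2) k :=
  (fun q => pderiv (0 : Fin 2) q)^[n] p

/-- Iterated partial derivative in the variable `z` (the variable `1`). -/
noncomputable def dZ {k : Type*} [CommSemiring k] (n : ℕ) (p : MvPolynomial (Fin 2) k) :
    MvPolynomial (Fin 2) k :=
  (fun q => pderiv (1 : Fin 2) q)^[n] p

/-- The `h`-th transvectant of two binary forms of degrees `r₁` and `r₂`. -/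
noncomputable def transvectant {k : Type*} [Field k] (r₁ r₂ h : ℕ)
    (f g : MvPolynomial (Fin 2) k) : MvPolynomial (Fin 2) k :=
  C ((((r₁ - h).factorial * (r₂ - h).factorial : ℕ) : k) /
      (((r₁.factorial * r₂.factorial : ℕ)) : k)) *
    ∑ j ∈ Finset.range (h + 1),
      C ((-1 : k) ^ j * (h.choose j : k)) * (dX (h - j) (dZ j f) * dX j (dZ (h - j) g))

/-- The determinant `R(q₁,q₂,q₃)` of three binary quadratic forms in the basis `x², xz, z²`. -/
noncomputable def Rdet {k : Type*} [CommRing k] (q₁ q₂ q₃ : MvPolynomial (Fin 2) k) : k :=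
  Matrix.det
    !![coeff (Finsupp.single 0 2) q₁, coeff (Finsupp.single 0 1 + Finsupp.single 1 1) q₁,
         coeff (Finsupp.single 1 2) q₁;
       coeff (Finsupp.single 0 2) q₂, coeff (Finsupp.single 0 1 + Finsupp.single 1 1) q₂,
         coeff (Finsupp.single 1 2) q₂;
       coeff (Finsupp.single 0 2) q₃, coeff (Finsupp.single 0 1 + Finsupp.single 1 1) q₃,
         coeff (Finsupp.single 1 2) q₃]


/-- The operator `δ_q(φ) = φ_xx·q_zz − 2·φ_xz·q_xz + φ_zz·q_xx` attached to a binary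
quadratic form `q`. -/
noncomputable def deltaOp {k : Type*} [CommRing k] (q p : MvPolynomial (Fin 2) k) :
    MvPolynomial (Fin 2) k :=
  dX 2 p * dZ 2 q - 2 * (pderiv (0 : Fin 2) (pderiv (1 : Fin 2) p)) *
      (pderiv (0 : Fin 2) (pderiv (1 : Fin 2) q)) + dZ 2 p * dX 2 q

/-!
In characteristic different from two, an explicit computation gives
`q₁* δ₁ + q₂* δ₂ + q₃* δ₃ = R(q₁, q₂, q₃) (x² ∂_x² + 2 x z ∂_x ∂_z + z² ∂_z²)`, and by Euler's
identity the right-hand operator multiplies forms of degree `n` by `n (n - 1) R(q₁, q₂, q₃)`. The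
sum in the theorem is the `r`-th power of the left-hand side, `r = n / 2`, with every multiplication
by a `qᵢ*` moved to the left of all the `δⱼ`. As the `δⱼ` commute, the innermost operator can be
split off such a power; since it lowers the degree by two, induction on `r` multiplies the factors
`n (n - 1)`, `(n - 2) (n - 3)`, … into a descending factorial.
-/

section NormalOrdering

theorem sum_piAntidiag_succ_multinomial_nsmul {ι M : Type*} [Fintype ι] [DecidableEq ι]
    [AddCommMonoid M] (g : (ι → ℕ) → M) (r : ℕ) :
    ∑ m ∈ Finset.univ.piAntidiag (r + 1), Nat.multinomial Finset.univ m • g m =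
      ∑ i, ∑ m ∈ Finset.univ.piAntidiag r,
        Nat.multinomial Finset.univ m • g (m + Pi.single i 1) := by
  -- Compare the images of `(∑ Xᵢ) ^ (r + 1) = ∑ Xᵢ * (∑ Xᵢ) ^ r` under the map `X ^ m ↦ g m`.
  let L : MvPolynomial ι ℕ →ₗ[ℕ] M := (basisMonomials ι ℕ).constr ℕ fun s => g s
  have L_monomial (c : ℕ) (s : ι →₀ ℕ) : L (monomial s c) = c • g s := by
    have h : monomial s c = c • basisMonomials ι ℕ s := by simp [smul_monomial]
    rw [h, map_smul, Module.Basis.constr_basis]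
  have prod_X_pow (m : ι → ℕ) :
      (∏ i, X i ^ m i : MvPolynomial ι ℕ) = monomial (Finsupp.equivFunOnFinite.symm m) 1 := by
    rw [monomial_eq, C_1, one_mul, Finsupp.prod_fintype _ _ fun _ => pow_zero _]
    rfl
  have sum_X_pow (r : ℕ) : (∑ i, X i : MvPolynomial ι ℕ) ^ r =
      ∑ m ∈ Finset.univ.piAntidiag r,
        monomial (Finsupp.equivFunOnFinite.symm m) (Nat.multinomial Finset.univ m) := by
    simp only [Finset.sum_pow_eq_sum_piAntidiag, prod_X_pow, ← nsmul_eq_mul, smul_monomial,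
      smul_eq_mul, mul_one]
  have h := congrArg L (pow_succ' (∑ i, X i : MvPolynomial ι ℕ) r)
  rw [sum_X_pow, sum_X_pow, Finset.sum_mul] at h
  simpa [Finset.mul_sum, X, monomial_mul, L_monomial, add_comm, Finsupp.single_eq_pi_single] using h

variable {A : Type*} [CommSemiring A]

/-- The normally ordered power `:(t₀D₀ + t₁D₁ + t₂D₂)^r:` applied to `f`: the multinomial
expansion in which all the multiplications by the `tᵢ` are carried out after all the operators
`Dᵢ`. -/
def normalOrderedPow (t : Fin 3 → A) (D : Fin 3 → A → A) (r : ℕ) (f : A) : A :=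
  ∑ m ∈ Finset.Nat.antidiagonalTuple 3 r, Nat.multinomial Finset.univ m •
    ((t 0 ^ m 0 * t 1 ^ m 1 * t 2 ^ m 2) * (D 0)^[m 0] ((D 1)^[m 1] ((D 2)^[m 2] f)))

theorem normalOrderedPow_zero (t : Fin 3 → A) (D : Fin 3 → A → A) (f : A) :
    normalOrderedPow t D 0 f = f := by
  simp [normalOrderedPow, Finset.Nat.antidiagonalTuple_zero_right, Nat.multinomial]

theorem normalOrderedPow_succ (t : Fin 3 → A) {D : Fin 3 → A → A}
    (hD : ∀ i j, Function.Commute (D i) (D j)) (r : ℕ) (f : A) :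
    normalOrderedPow t D (r + 1) f = ∑ i, t i * normalOrderedPow t D r (D i f) := by
  simp only [normalOrderedPow, ← Finset.piAntidiag_univ_fin_eq_antidiagonalTuple,
    sum_piAntidiag_succ_multinomial_nsmul, Finset.mul_sum, mul_smul_comm]
  have iterate_comm (i j : Fin 3) (m : ℕ) (p : A) : (D i)^[m] (D j p) = D j ((D i)^[m] p) :=
    (hD i j).iterate_left m p
  refine Finset.sum_congr rfl fun i _ => Finset.sum_congr rfl fun m _ => ?_
  congr 1
  fin_cases i <;>
    simp only [Fin.zero_eta, Fin.mk_one, Fin.reduceFinMk, Pi.add_apply, Pi.single_apply,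
      Fin.reduceEq, if_true, if_false, add_zero, Function.iterate_succ_apply, iterate_comm] <;>
    ring

end NormalOrdering

section PartialDerivatives

variable {σ R : Type*} [CommSemiring R]

theorem pderiv_pderiv_comm (i j : σ) (p : MvPolynomial σ R) :
    pderiv i (pderiv j p) = pderiv j (pderiv i p) := by
  classical
  induction p using MvPolynomial.induction_on' with
  | monomial s c =>
    obtain rfl | hij := eq_or_ne i j
    · rfl
    · simp only [pderiv_monomial, Finsupp.tsub_apply, Finsupp.single_apply, hij, hij.symm,
        if_false, tsub_zero, tsub_right_comm, mul_right_comm]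
  | add p q hp hq => simp only [map_add, hp, hq]

theorem sum_sum_X_mul_X_mul_pderiv_pderiv [Fintype σ] {n : ℕ} {f : MvPolynomial σ R}
    (hf : f.IsHomogeneous n) :
    ∑ j, ∑ i, X j * X i * pderiv i (pderiv j f) = n.descFactorial 2 • f := by
  simp only [mul_assoc, ← Finset.mul_sum, hf.pderiv.sum_X_mul_pderiv, mul_smul_comm,
    ← Finset.smul_sum, hf.sum_X_mul_pderiv, smul_smul]
  simp [Nat.descFactorial_succ]

theorem exists_eq_C_of_isHomogeneous_zero {p : MvPolynomial σ R} (hp : p.IsHomogeneous 0) :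
    ∃ c, p = C c :=
  ⟨_, totalDegree_eq_zero_iff_eq_C.mp ((totalDegree_zero_iff_isHomogeneous _).mpr hp)⟩

theorem exists_pderiv_pderiv_eq_C {q : MvPolynomial σ R} (hq : q.IsHomogeneous 2) (i j : σ) :
    ∃ c, pderiv i (pderiv j q) = C c :=
  exists_eq_C_of_isHomogeneous_zero hq.pderiv.pderiv

end PartialDerivatives

section DeltaOp

variable {k : Type*} [CommRing k]

theorem deltaOp_eq (q p : MvPolynomial (Fin 2) k) :
    deltaOp q p = pderiv 0 (pderiv 0 p) * pderiv 1 (pderiv 1 q) -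
      2 * pderiv 0 (pderiv 1 p) * pderiv 0 (pderiv 1 q) +
      pderiv 1 (pderiv 1 p) * pderiv 0 (pderiv 0 q) :=
  rfl

theorem isHomogeneous_deltaOp {q p : MvPolynomial (Fin 2) k} {n : ℕ}
    (hq : q.IsHomogeneous 2) (hp : p.IsHomogeneous n) : (deltaOp q p).IsHomogeneous (n - 2) := by
  have hpq (a b c d : Fin 2) :
      (pderiv a (pderiv b p) * pderiv c (pderiv d q)).IsHomogeneous (n - 2) :=
    hp.pderiv.pderiv.mul hq.pderiv.pderiv
  rw [deltaOp_eq, mul_assoc, ← map_ofNat C]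
  exact ((hpq ..).sub ((hpq ..).C_mul 2)).add (hpq ..)

theorem isHomogeneous_iterate_deltaOp {q p : MvPolynomial (Fin 2) k} {n : ℕ}
    (hq : q.IsHomogeneous 2) (hp : p.IsHomogeneous n) (m : ℕ) :
    ((deltaOp q)^[m] p).IsHomogeneous (n - 2 * m) := by
  induction m with
  | zero => exact hp
  | succ m ih =>
    rw [Function.iterate_succ_apply', mul_add_one, ← Nat.sub_sub]
    exact isHomogeneous_deltaOp hq ih

theorem deltaOp_commute {q q' : MvPolynomial (Fin 2) k} (hq : q.IsHomogeneous 2)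
    (hq' : q'.IsHomogeneous 2) : Function.Commute (deltaOp q) (deltaOp q') := by
  intro p
  obtain ⟨a, ha⟩ := exists_pderiv_pderiv_eq_C hq 0 0
  obtain ⟨b, hb⟩ := exists_pderiv_pderiv_eq_C hq 0 1
  obtain ⟨c, hc⟩ := exists_pderiv_pderiv_eq_C hq 1 1
  obtain ⟨a', ha'⟩ := exists_pderiv_pderiv_eq_C hq' 0 0
  obtain ⟨b', hb'⟩ := exists_pderiv_pderiv_eq_C hq' 0 1
  obtain ⟨c', hc'⟩ := exists_pderiv_pderiv_eq_C hq' 1 1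
  simp only [deltaOp_eq, ha, hb, hc, ha', hb', hc', ← map_ofNat C 2, map_add,
    map_sub, pderiv_mul, pderiv_C, mul_zero, zero_mul, zero_add, add_zero,
    pderiv_pderiv_comm (1 : Fin 2) 0]
  ring

end DeltaOp

section BinaryQuadratic

/-- The binary quadratic form `a x² + b xz + c z²`. -/
noncomputable def binaryQuadratic {k : Type*} [CommSemiring k] (a b c : k) :
    MvPolynomial (Fin 2) k :=
  C a * X 0 ^ 2 + C b * (X 0 * X 1) + C c * X 1 ^ 2

section CommSemiring

variable {k : Type*} [CommSemiring k]

theorem pderiv_zero_binaryQuadratic (a b c : k) :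
    pderiv 0 (binaryQuadratic a b c) = 2 * C a * X 0 + C b * X 1 := by
  simp only [binaryQuadratic, map_add, pderiv_C, pderiv_pow, pderiv_mul, pderiv_X,
    Pi.single_apply, Fin.reduceEq, if_true, if_false, Nat.cast_ofNat]
  ring

theorem pderiv_one_binaryQuadratic (a b c : k) :
    pderiv 1 (binaryQuadratic a b c) = C b * X 0 + 2 * C c * X 1 := by
  simp only [binaryQuadratic, map_add, pderiv_C, pderiv_pow, pderiv_mul, pderiv_X,
    Pi.single_apply, Fin.reduceEq, if_true, if_false, Nat.cast_ofNat]
  ring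

end CommSemiring

theorem Rdet_binaryQuadratic {k : Type*} [CommRing k] (a₁ b₁ c₁ a₂ b₂ c₂ a₃ b₃ c₃ : k) :
    Rdet (binaryQuadratic a₁ b₁ c₁) (binaryQuadratic a₂ b₂ c₂) (binaryQuadratic a₃ b₃ c₃) =
      Matrix.det !![a₁, b₁, c₁; a₂, b₂, c₂; a₃, b₃, c₃] := by
  have coeffs (a b c : k) :
      coeff (Finsupp.single 0 2) (binaryQuadratic a b c) = a ∧
      coeff (Finsupp.single 0 1 + Finsupp.single 1 1) (binaryQuadratic a b c) = b ∧
      coeff (Finsupp.single 1 2) (binaryQuadratic a b c) = c := by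
    have h : (X 0 * X 1 : MvPolynomial (Fin 2) k) =
        monomial (Finsupp.single 0 1 + Finsupp.single 1 1) 1 := by
      simp [X, monomial_mul]
    simp [binaryQuadratic, h, X_pow_eq_monomial, coeff_monomial, Finsupp.ext_iff,
      Fin.forall_fin_two]
  simp only [Rdet, coeffs]

theorem deltaOp_binaryQuadratic {k : Type*} [CommRing k] (a b c : k)
    (p : MvPolynomial (Fin 2) k) :
    deltaOp (binaryQuadratic a b c) p = 2 * (C c * pderiv 0 (pderiv 0 p) -
      C b * pderiv 0 (pderiv 1 p) + C a * pderiv 1 (pderiv 1 p)) := by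
  simp only [deltaOp_eq, pderiv_zero_binaryQuadratic, pderiv_one_binaryQuadratic, map_add,
    mul_assoc, ← map_ofNat C 2, pderiv_C_mul, pderiv_X, Pi.single_apply, Fin.reduceEq, if_true,
    if_false]
  ring

variable {k : Type*} [Field k]

theorem exists_eq_binaryQuadratic (h2 : (2 : k) ≠ 0) {q : MvPolynomial (Fin 2) k}
    (hq : q.IsHomogeneous 2) : ∃ a b c, q = binaryQuadratic a b c := by
  obtain ⟨α, hα⟩ := exists_pderiv_pderiv_eq_C hq 0 0
  obtain ⟨β, hβ⟩ := exists_pderiv_pderiv_eq_C hq 0 1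
  obtain ⟨γ, hγ⟩ := exists_pderiv_pderiv_eq_C hq 1 1
  have euler := sum_sum_X_mul_X_mul_pderiv_pderiv hq
  simp only [Fin.sum_univ_two, pderiv_pderiv_comm (1 : Fin 2) 0, hα, hβ, hγ] at euler
  have inv_two_mul : (C 2⁻¹ : MvPolynomial (Fin 2) k) * 2 = 1 := by
    rw [← map_ofNat C 2, ← C_mul, inv_mul_cancel₀ h2, C_1]
  refine ⟨2⁻¹ * α, β, 2⁻¹ * γ, ?_⟩
  simp only [Nat.descFactorial, Nat.add_one_sub_one, tsub_zero, mul_one, nsmul_eq_mul] at euler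
  simp only [binaryQuadratic, C_mul]
  linear_combination (-q + C β * (X 0 * X 1)) * inv_two_mul - C 2⁻¹ * euler

theorem transvectant_two_two_one (f g : MvPolynomial (Fin 2) k) :
    transvectant 2 2 1 f g =
      C (4⁻¹ : k) * (pderiv 0 f * pderiv 1 g - pderiv 1 f * pderiv 0 g) := by
  simp [transvectant, Finset.sum_range_succ, dX, dZ, sub_eq_add_neg]

theorem sum_transvectant_mul_deltaOp (h2 : (2 : k) ≠ 0) {q₁ q₂ q₃ : MvPolynomial (Fin 2) k}
    (h₁ : q₁.IsHomogeneous 2) (h₂ : q₂.IsHomogeneous 2) (h₃ : q₃.IsHomogeneous 2)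
    (p : MvPolynomial (Fin 2) k) :
    transvectant 2 2 1 q₂ q₃ * deltaOp q₁ p + transvectant 2 2 1 q₃ q₁ * deltaOp q₂ p +
        transvectant 2 2 1 q₁ q₂ * deltaOp q₃ p =
      C (Rdet q₁ q₂ q₃) * ∑ j, ∑ i, X j * X i * pderiv i (pderiv j p) := by
  obtain ⟨a₁, b₁, c₁, rfl⟩ := exists_eq_binaryQuadratic h2 h₁
  obtain ⟨a₂, b₂, c₂, rfl⟩ := exists_eq_binaryQuadratic h2 h₂
  obtain ⟨a₃, b₃, c₃, rfl⟩ := exists_eq_binaryQuadratic h2 h₃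
  have inv_four_mul : (C 4⁻¹ : MvPolynomial (Fin 2) k) * 4 = 1 := by
    have h4 : (4 : k) ≠ 0 := by
      rw [show (4 : k) = 2 * 2 by norm_num]
      exact mul_ne_zero h2 h2
    rw [← map_ofNat C 4, ← C_mul, inv_mul_cancel₀ h4, C_1]
  simp only [transvectant_two_two_one, deltaOp_binaryQuadratic, Rdet_binaryQuadratic,
    pderiv_zero_binaryQuadratic, pderiv_one_binaryQuadratic, Matrix.det_fin_three, Matrix.of_apply,
    Matrix.cons_val, Fin.sum_univ_two, pderiv_pderiv_comm (1 : Fin 2) 0, map_add, map_sub, map_mul]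
  generalize (C 4⁻¹ : MvPolynomial (Fin 2) k) = t at inv_four_mul
  linear_combination (C a₁ * C b₂ * C c₃ - C a₁ * C c₂ * C b₃ - C b₁ * C a₂ * C c₃ +
    C b₁ * C c₂ * C a₃ + C c₁ * C a₂ * C b₃ - C c₁ * C b₂ * C a₃) *
    (X 0 ^ 2 * pderiv 0 (pderiv 0 p) + 2 * (X 0 * X 1) * pderiv 0 (pderiv 1 p) +
      X 1 ^ 2 * pderiv 1 (pderiv 1 p)) * inv_four_mul

end BinaryQuadratic

theorem normalOrderedPow_deltaOp {k : Type*} [Field k] (h2 : (2 : k) ≠ 0)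
    {q₁ q₂ q₃ : MvPolynomial (Fin 2) k}
    (h₁ : q₁.IsHomogeneous 2) (h₂ : q₂.IsHomogeneous 2) (h₃ : q₃.IsHomogeneous 2)
    {n : ℕ} {f : MvPolynomial (Fin 2) k} (hf : f.IsHomogeneous n) (r : ℕ) :
    normalOrderedPow
        ![transvectant 2 2 1 q₂ q₃, transvectant 2 2 1 q₃ q₁, transvectant 2 2 1 q₁ q₂]
        ![deltaOp q₁, deltaOp q₂, deltaOp q₃] r f =
      C ((n.descFactorial (2 * r) : k) * Rdet q₁ q₂ q₃ ^ r) * f := by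
  have hcomm : ∀ i j, Function.Commute (![deltaOp q₁, deltaOp q₂, deltaOp q₃] i)
      (![deltaOp q₁, deltaOp q₂, deltaOp q₃] j) := by
    simp [Fin.forall_fin_succ, deltaOp_commute, h₁, h₂, h₃]
  induction r generalizing n f with
  | zero => simp [normalOrderedPow_zero]
  | succ r ih =>
    have hdesc : (n - 2).descFactorial (2 * r) * n.descFactorial 2 =
        n.descFactorial (2 * (r + 1)) :=
      Nat.descFactorial_mul_descFactorial (Nat.le_add_left 2 (2 * r))
    calc
      _ = C (((n - 2).descFactorial (2 * r) : k) * Rdet q₁ q₂ q₃ ^ r) *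
          (transvectant 2 2 1 q₂ q₃ * deltaOp q₁ f + transvectant 2 2 1 q₃ q₁ * deltaOp q₂ f +
            transvectant 2 2 1 q₁ q₂ * deltaOp q₃ f) := by
        rw [normalOrderedPow_succ _ hcomm, Fin.sum_univ_three]
        simp only [Matrix.cons_val]
        rw [ih (isHomogeneous_deltaOp h₁ hf), ih (isHomogeneous_deltaOp h₂ hf),
          ih (isHomogeneous_deltaOp h₃ hf)]
        ring
      _ = C (((n - 2).descFactorial (2 * r) : k) * Rdet q₁ q₂ q₃ ^ r) *
          (C (Rdet q₁ q₂ q₃) * n.descFactorial 2 • f) := by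
        rw [sum_transvectant_mul_deltaOp h2 h₁ h₂ h₃, sum_sum_X_mul_X_mul_pderiv_pderiv hf]
      _ = _ := by
        rw [← hdesc]
        simp only [nsmul_eq_mul, map_mul, map_pow, map_natCast, Nat.cast_mul]
        ring

theorem statement8_general {k : Type*} [Field k] (h2 : (2 : k) ≠ 0) (n r : ℕ)
    {f : MvPolynomial (Fin 2) k} (hf : f.IsHomogeneous n) {q₁ q₂ q₃ : MvPolynomial (Fin 2) k}
    (h₁ : q₁.IsHomogeneous 2) (h₂ : q₂.IsHomogeneous 2) (h₃ : q₃.IsHomogeneous 2) :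
    (∀ m₁ m₂ m₃ : ℕ, m₁ + m₂ + m₃ = r →
      ((deltaOp q₁)^[m₁] ((deltaOp q₂)^[m₂] ((deltaOp q₃)^[m₃] f))).IsHomogeneous (n - 2 * r)) ∧
    C ((n.descFactorial (2 * r) : k) * Rdet q₁ q₂ q₃ ^ r) * f =
      ∑ m ∈ Finset.Nat.antidiagonalTuple 3 r,
        C ((Nat.multinomial Finset.univ m : ℕ) : k) *
          (transvectant 2 2 1 q₂ q₃ ^ m 0 * transvectant 2 2 1 q₃ q₁ ^ m 1 *
            transvectant 2 2 1 q₁ q₂ ^ m 2) *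
          (deltaOp q₁)^[m 0] ((deltaOp q₂)^[m 1] ((deltaOp q₃)^[m 2] f)) := by
  constructor
  · rintro m₁ m₂ m₃ rfl
    have h := isHomogeneous_iterate_deltaOp h₁ (isHomogeneous_iterate_deltaOp h₂
      (isHomogeneous_iterate_deltaOp h₃ hf m₃) m₂) m₁
    rwa [show n - 2 * m₃ - 2 * m₂ - 2 * m₁ = n - 2 * (m₁ + m₂ + m₃) by omega] at h
  · rw [← normalOrderedPow_deltaOp h2 h₁ h₂ h₃ hf, normalOrderedPow]
    simp only [Matrix.cons_val, nsmul_eq_mul, map_natCast, mul_assoc]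

theorem natCast_ne_zero_of_factorial_ne_zero {R : Type*} [Semiring R] {m n : ℕ} (hm : 0 < m)
    (hmn : m ≤ n) (hn : (n.factorial : R) ≠ 0) : (m : R) ≠ 0 := by
  obtain ⟨d, hd⟩ := Nat.dvd_factorial hm hmn
  rw [hd, Nat.cast_mul] at hn
  exact left_ne_zero_of_mul hn

/-- Let `n ≥ 4` be even and `k` a field of characteristic `0` or `> n` (i.e. `n! ≠ 0` in `k`).
For a binary `n`-form `f` and binary quadratic forms `q₁,q₂,q₃` one has: each
`δ₁^{m₁}δ₂^{m₂}δ₃^{m₃}(f)` with `m₁+m₂+m₃ = n/2` is a constant, and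
`n!·R(q₁,q₂,q₃)^{n/2}·f = Σ_{m₁+m₂+m₃=n/2} ((n/2)!/(m₁!m₂!m₃!)) ·
  q₁*^{m₁}·q₂*^{m₂}·q₃*^{m₃} · δ₁^{m₁}δ₂^{m₂}δ₃^{m₃}(f)`. -/
theorem statement8 {k : Type*} [Field k] (n : ℕ) (hn : 4 ≤ n) (heven : Even n)
    (hchar : ((n.factorial : ℕ) : k) ≠ 0)
    (f : MvPolynomial (Fin 2) k) (hf : f.IsHomogeneous n)
    (q₁ q₂ q₃ : MvPolynomial (Fin 2) k)
    (h₁ : q₁.IsHomogeneous 2) (h₂ : q₂.IsHomogeneous 2) (h₃ : q₃.IsHomogeneous 2) :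
    (∀ m₁ m₂ m₃ : ℕ, m₁ + m₂ + m₃ = n / 2 →
      ∃ c : k, (deltaOp q₁)^[m₁] ((deltaOp q₂)^[m₂] ((deltaOp q₃)^[m₃] f)) = C c) ∧
    C ((n.factorial : k) * Rdet q₁ q₂ q₃ ^ (n / 2)) * f =
      ∑ m ∈ Finset.Nat.antidiagonalTuple 3 (n / 2),
        C ((Nat.multinomial Finset.univ m : ℕ) : k) *
          (transvectant 2 2 1 q₂ q₃ ^ m 0 * transvectant 2 2 1 q₃ q₁ ^ m 1 *
            transvectant 2 2 1 q₁ q₂ ^ m 2) *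
          (deltaOp q₁)^[m 0] ((deltaOp q₂)^[m 1] ((deltaOp q₃)^[m 2] f)) := by
  have h := statement8_general (mod_cast natCast_ne_zero_of_factorial_ne_zero two_pos
    (by omega : 2 ≤ n) hchar) n (n / 2) hf h₁ h₂ h₃
  rw [Nat.two_mul_div_two_of_even heven, Nat.sub_self, Nat.descFactorial_self] at h
  exact ⟨fun m₁ m₂ m₃ hm => exists_eq_C_of_isHomogeneous_zero (h.1 m₁ m₂ m₃ hm), h.2⟩
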